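/- arXiv:1305.0620 — 2 statements merged into one kernel-verified Lean document; each statement's English description precedes it below -/
import Mathlib

section
/- Let X_ρ be a modular space whose modular ρ satisfies the Δ₂-type condition with constant k > 0 (i.e., ρ(2x) ≤ k·ρ(x) for all x ∈ X_ρ), and let T : X_ρ → X_ρ satisfy ρ(Tx − Ty) ≤ c·ρ(x − y) for all x, y ∈ X_ρ, where c ∈ [0,1) and c·k < 1/2. Then for every x ∈ X_ρ, the sequence of Picard iterates {Tⁿx} is ρ-Cauchy. -/
open Filter Topology ENNReal NNReal

variable {X : Type*} [AddCommGroup X] [Module ℝ X]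

/-- A modular on a real vector space `X`. -/
def IsModular (ρ : X → ℝ≥0∞) : Prop :=
  (∀ x : X, ρ x = 0 ↔ x = 0) ∧ (∀ x : X, ρ (-x) = ρ x) ∧
    (∀ x y : X, ∀ α β : ℝ, 0 ≤ α → 0 ≤ β → α + β = 1 →
      ρ (α • x + β • y) ≤ ρ x + ρ y)

/-- For `s ∈ (0,1]`, an `s`-convex modular on a real vector space `X`. -/
def IsSConvexModular (ρ : X → ℝ≥0∞) (s : ℝ) : Prop :=
  (∀ x : X, ρ x = 0 ↔ x = 0) ∧ (∀ x : X, ρ (-x) = ρ x) ∧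
    (∀ x y : X, ∀ a b : ℝ, 0 ≤ a → 0 ≤ b → a ^ s + b ^ s = 1 →
      ρ (a • x + b • y) ≤ ENNReal.ofReal (a ^ s) * ρ x + ENNReal.ofReal (b ^ s) * ρ y)

/-- The modular space `X_ρ = {x ∈ X : ρ(αx) → 0 as α → 0}`. -/
def modularSpace (ρ : X → ℝ≥0∞) : Set X :=
  {x : X | Tendsto (fun α : ℝ => ρ (α • x)) (𝓝 0) (𝓝 0)}

/-- `ρ`-convergence of a sequence to a point: `ρ(x_n − a) → 0`. -/
def RhoTendsto (ρ : X → ℝ≥0∞) (x : ℕ → X) (a : X) : Prop :=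
  Tendsto (fun n => ρ (x n - a)) atTop (𝓝 0)

/-- A sequence is `ρ`-Cauchy if `ρ(x_m − x_n) → 0` as `m, n → ∞`. -/
def RhoCauchy (ρ : X → ℝ≥0∞) (x : ℕ → X) : Prop :=
  Tendsto (fun p : ℕ × ℕ => ρ (x p.1 - x p.2)) (atTop ×ˢ atTop) (𝓝 0)

/-- `X_ρ` is `ρ`-complete if every `ρ`-Cauchy sequence in `X_ρ`
is `ρ`-convergent to a point of `X_ρ`. -/
def RhoComplete (ρ : X → ℝ≥0∞) : Prop :=
  ∀ x : ℕ → X, (∀ n, x n ∈ modularSpace ρ) → RhoCauchy ρ x →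
    ∃ a ∈ modularSpace ρ, RhoTendsto ρ x a

/-- The Fatou property of a modular. -/
def FatouProperty (ρ : X → ℝ≥0∞) : Prop :=
  ∀ (x y : ℕ → X) (a b : X), RhoTendsto ρ x a → RhoTendsto ρ y b →
    ρ (a - b) ≤ atTop.liminf (fun n => ρ (x n - y n))

/-- The `Δ₂`-type condition with constant `k`: `ρ(2x) ≤ k·ρ(x)` on `X_ρ`. -/
def Delta2Type (ρ : X → ℝ≥0∞) (k : ℝ≥0) : Prop :=
  ∀ x ∈ modularSpace ρ, ρ ((2 : ℝ) • x) ≤ (k : ℝ≥0∞) * ρ x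

/-- The `Δ₂`-condition: for sequences in `X_ρ`, `ρ(x_n) → 0` implies `ρ(2x_n) → 0`. -/
def Delta2Condition (ρ : X → ℝ≥0∞) : Prop :=
  ∀ x : ℕ → X, (∀ n, x n ∈ modularSpace ρ) →
    Tendsto (fun n => ρ (x n)) atTop (𝓝 0) →
      Tendsto (fun n => ρ ((2 : ℝ) • x n)) atTop (𝓝 0)

/-- The `F`-norm associated with a modular: `‖x‖_ρ = inf {t > 0 : ρ(x/t) ≤ t}`. -/
noncomputable def fnorm (ρ : X → ℝ≥0∞) (x : X) : ℝ :=
  sInf {t : ℝ | 0 < t ∧ ρ (t⁻¹ • x) ≤ ENNReal.ofReal t}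

/-!
Put `d m n = ρ (Tᵐ x - Tⁿ x)`. The `Δ₂`-type condition turns convexity of `ρ` into the relaxed
triangle inequality `d m p ≤ k (d m n + d n p)`, and it makes `ρ` finite on the modular space
because `ρ x ≤ k ^ n ρ (2 ^ (-n) x)`. The contraction hypothesis gives
`d (m + N) (n + N) ≤ c ^ N d m n`. Choosing `N` with `k c ^ N ≤ 1 / 2`, we get
`d (m + N) 0 ≤ k (d (m + N) N + d N 0) ≤ d m 0 / 2 + k d N 0`, so all `d m n` are bounded by
some `M < ∞`, and then `d m n ≤ c ^ min m n * M` tends to `0`.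
-/

section RelaxedTriangle

variable {d : ℕ → ℕ → ℝ≥0∞} {c k : ℝ≥0}

theorem apply_add_add_le_pow_mul_of_succ_succ_le
    (hshift : ∀ m n, d (m + 1) (n + 1) ≤ c * d m n) (m n N : ℕ) :
    d (m + N) (n + N) ≤ (c : ℝ≥0∞) ^ N * d m n := by
  induction N with
  | zero => simp
  | succ N ih =>
    calc d (m + N + 1) (n + N + 1) ≤ c * d (m + N) (n + N) := hshift _ _
      _ ≤ c * ((c : ℝ≥0∞) ^ N * d m n) := by gcongr
      _ = (c : ℝ≥0∞) ^ (N + 1) * d m n := by rw [pow_succ', mul_assoc]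

theorem exists_pos_mul_pow_le_half (k : ℝ≥0) (hc : c < 1) :
    ∃ N : ℕ, 0 < N ∧ (k : ℝ≥0∞) * (c : ℝ≥0∞) ^ N ≤ 2⁻¹ := by
  have hlim : Tendsto (fun N : ℕ => (k : ℝ≥0∞) * (c : ℝ≥0∞) ^ N) atTop (𝓝 0) := by
    simpa only [mul_zero] using ENNReal.Tendsto.const_mul
      (ENNReal.tendsto_pow_atTop_nhds_zero_of_lt_one (by exact_mod_cast hc))
      (Or.inr coe_ne_top)
  exact ((eventually_gt_atTop 0).and (hlim.eventually_le_const (by simp))).exists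

theorem exists_bound_of_add_le_half {b : ℕ → ℝ≥0∞} {C : ℝ≥0∞} {N : ℕ}
    (hb : ∀ n, b n ≠ ∞) (hC : C ≠ ∞) (hN : 0 < N) (hstep : ∀ n, b (n + N) ≤ 2⁻¹ * b n + C) :
    ∃ M ≠ ∞, ∀ n, b n ≤ M := by
  set M : ℝ≥0∞ := ∑ r ∈ Finset.range N, b r + 2 * C
  have hM : M ≠ ∞ := add_ne_top.2 ⟨sum_ne_top.2 fun r _ => hb r, by finiteness⟩
  have hCM : C ≤ 2⁻¹ * M :=
    calc C = 2⁻¹ * (2 * C) := by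
          rw [← mul_assoc, ENNReal.inv_mul_cancel two_ne_zero ofNat_ne_top, one_mul]
      _ ≤ 2⁻¹ * M := by gcongr; exact le_add_self
  refine ⟨M, hM, fun n => ?_⟩
  induction n using Nat.strong_induction_on with
  | _ n ih =>
    rcases lt_or_ge n N with hn | hn
    · exact (Finset.single_le_sum_of_canonicallyOrdered (f := b)
        (Finset.mem_range.2 hn)).trans le_self_add
    · obtain ⟨m, rfl⟩ := Nat.exists_eq_add_of_le' hn
      have hm : b m ≤ M := ih m (by lia)
      calc b (m + N) ≤ 2⁻¹ * b m + C := hstep m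
        _ ≤ 2⁻¹ * M + 2⁻¹ * M := by gcongr
        _ = M := by rw [← add_mul, ENNReal.inv_two_add_inv_two, one_mul]

theorem exists_bound_apply_zero_of_relaxed_triangle (htri : ∀ m n p, d m p ≤ k * (d m n + d n p))
    (hshift : ∀ m n, d (m + 1) (n + 1) ≤ c * d m n) (hfin : ∀ n, d n 0 ≠ ∞) (hc : c < 1) :
    ∃ M ≠ ∞, ∀ n, d n 0 ≤ M := by
  obtain ⟨N, hN_pos, hN⟩ := exists_pos_mul_pow_le_half k hc
  have hC : k * d N 0 ≠ ∞ := mul_ne_top coe_ne_top (hfin N)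
  refine exists_bound_of_add_le_half hfin hC hN_pos fun n => ?_
  have hn : d (n + N) N ≤ (c : ℝ≥0∞) ^ N * d n 0 := by
    simpa only [zero_add] using apply_add_add_le_pow_mul_of_succ_succ_le hshift n 0 N
  calc d (n + N) 0 ≤ k * (d (n + N) N + d N 0) := htri _ _ _
    _ ≤ k * ((c : ℝ≥0∞) ^ N * d n 0 + d N 0) := by gcongr
    _ = k * (c : ℝ≥0∞) ^ N * d n 0 + k * d N 0 := by ring
    _ ≤ 2⁻¹ * d n 0 + k * d N 0 := by gcongr

theorem exists_bound_of_relaxed_triangle (hsymm : ∀ m n, d m n = d n m)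
    (htri : ∀ m n p, d m p ≤ k * (d m n + d n p))
    (hshift : ∀ m n, d (m + 1) (n + 1) ≤ c * d m n) (hfin : ∀ n, d n 0 ≠ ∞) (hc : c < 1) :
    ∃ M ≠ ∞, ∀ m n, d m n ≤ M := by
  obtain ⟨M, hM_top, hM⟩ := exists_bound_apply_zero_of_relaxed_triangle htri hshift hfin hc
  refine ⟨k * (M + M), by finiteness, fun m n => (htri m 0 n).trans ?_⟩
  gcongr
  exacts [hM m, hsymm 0 n ▸ hM n]

theorem tendsto_zero_of_relaxed_triangle (hsymm : ∀ m n, d m n = d n m)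
    (htri : ∀ m n p, d m p ≤ k * (d m n + d n p))
    (hshift : ∀ m n, d (m + 1) (n + 1) ≤ c * d m n) (hfin : ∀ n, d n 0 ≠ ∞) (hc : c < 1) :
    Tendsto (fun p : ℕ × ℕ => d p.1 p.2) (atTop ×ˢ atTop) (𝓝 0) := by
  obtain ⟨M, hM_top, hM⟩ := exists_bound_of_relaxed_triangle hsymm htri hshift hfin hc
  have hbound (p : ℕ × ℕ) : d p.1 p.2 ≤ (c : ℝ≥0∞) ^ min p.1 p.2 * M := by
    obtain ⟨i, hi⟩ := Nat.exists_eq_add_of_le' (min_le_left p.1 p.2)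
    obtain ⟨j, hj⟩ := Nat.exists_eq_add_of_le' (min_le_right p.1 p.2)
    calc d p.1 p.2 = d (i + min p.1 p.2) (j + min p.1 p.2) := by rw [← hi, ← hj]
      _ ≤ (c : ℝ≥0∞) ^ min p.1 p.2 * d i j := apply_add_add_le_pow_mul_of_succ_succ_le hshift i j _
      _ ≤ (c : ℝ≥0∞) ^ min p.1 p.2 * M := by gcongr; exact hM i j
  have hmin : Tendsto (fun p : ℕ × ℕ => min p.1 p.2) (atTop ×ˢ atTop) atTop :=
    tendsto_atTop.2 fun N => ((tendsto_fst.eventually_ge_atTop N).and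
      (tendsto_snd.eventually_ge_atTop N)).mono fun _ h => le_min h.1 h.2
  have hgeom : Tendsto (fun n : ℕ => (c : ℝ≥0∞) ^ n * M) atTop (𝓝 0) := by
    simpa only [zero_mul] using ENNReal.Tendsto.mul_const
      (ENNReal.tendsto_pow_atTop_nhds_zero_of_lt_one (by exact_mod_cast hc)) (Or.inr hM_top)
  exact tendsto_of_tendsto_of_tendsto_of_le_of_le tendsto_const_nhds (hgeom.comp hmin)
    (fun _ => zero_le) hbound

end RelaxedTriangle

variable {ρ : X → ℝ≥0∞}

theorem smul_mem_modularSpace (t : ℝ) {x : X} (hx : x ∈ modularSpace ρ) :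
    t • x ∈ modularSpace ρ := by
  have hmul : Tendsto (· * t) (𝓝 0) (𝓝 0) := by
    simpa only [zero_mul] using (continuous_mul_const t).tendsto 0
  simpa only [modularSpace, Set.mem_ofPred_eq, Function.comp_def, mul_smul] using
    Tendsto.comp hx hmul

theorem IsModular.sub_le_two_smul (hmod : IsModular ρ) (x y : X) :
    ρ (x - y) ≤ ρ ((2 : ℝ) • x) + ρ ((2 : ℝ) • y) := by
  obtain ⟨-, hneg, hconv⟩ := hmod
  calc ρ (x - y) = ρ ((1 / 2 : ℝ) • (2 : ℝ) • x + (1 / 2 : ℝ) • -((2 : ℝ) • y)) := by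
        congr 1; module
    _ ≤ ρ ((2 : ℝ) • x) + ρ (-((2 : ℝ) • y)) :=
        hconv _ _ _ _ (by norm_num) (by norm_num) (by norm_num)
    _ = ρ ((2 : ℝ) • x) + ρ ((2 : ℝ) • y) := by rw [hneg]

theorem IsModular.map_sub_comm (hmod : IsModular ρ) (x y : X) : ρ (x - y) = ρ (y - x) := by
  rw [← hmod.2.1, neg_sub]

theorem IsModular.sub_mem_modularSpace (hmod : IsModular ρ) {x y : X}
    (hx : x ∈ modularSpace ρ) (hy : y ∈ modularSpace ρ) : x - y ∈ modularSpace ρ := by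
  have hsum : Tendsto (fun α : ℝ => ρ (α • (2 : ℝ) • x) + ρ (α • (2 : ℝ) • y)) (𝓝 0) (𝓝 0) := by
    simpa only [add_zero] using
      Tendsto.add (smul_mem_modularSpace 2 hx) (smul_mem_modularSpace 2 hy)
  refine tendsto_of_tendsto_of_tendsto_of_le_of_le tendsto_const_nhds hsum
    (fun _ => zero_le) fun α => ?_
  simpa only [smul_sub, smul_comm α (2 : ℝ)] using hmod.sub_le_two_smul (α • x) (α • y)

namespace Delta2Type

variable {k : ℝ≥0}

theorem two_pow_smul_le (hΔ : Delta2Type ρ k) {x : X} (hx : x ∈ modularSpace ρ) (n : ℕ) :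
    ρ ((2 : ℝ) ^ n • x) ≤ (k : ℝ≥0∞) ^ n * ρ x := by
  induction n with
  | zero => simp
  | succ n ih =>
    calc ρ ((2 : ℝ) ^ (n + 1) • x) = ρ ((2 : ℝ) • (2 : ℝ) ^ n • x) := by rw [pow_succ', mul_smul]
      _ ≤ k * ρ ((2 : ℝ) ^ n • x) := hΔ _ (smul_mem_modularSpace _ hx)
      _ ≤ k * ((k : ℝ≥0∞) ^ n * ρ x) := by gcongr
      _ = (k : ℝ≥0∞) ^ (n + 1) * ρ x := by rw [pow_succ', mul_assoc]

theorem ne_top (hΔ : Delta2Type ρ k) {x : X} (hx : x ∈ modularSpace ρ) : ρ x ≠ ∞ := by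
  have hpow : Tendsto (fun n : ℕ => ((2 : ℝ) ^ n)⁻¹) atTop (𝓝 0) :=
    tendsto_inv_atTop_zero.comp (tendsto_pow_atTop_atTop_of_one_lt one_lt_two)
  obtain ⟨n, hn⟩ : ∃ n : ℕ, ρ (((2 : ℝ) ^ n)⁻¹ • x) < ∞ :=
    ((Tendsto.comp hx hpow).eventually_lt_const zero_lt_top).exists
  have hle := hΔ.two_pow_smul_le (smul_mem_modularSpace ((2 : ℝ) ^ n)⁻¹ hx) n
  rw [smul_inv_smul₀ (by positivity)] at hle
  exact ne_top_of_le_ne_top (by finiteness) hle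

theorem sub_le (hΔ : Delta2Type ρ k) (hmod : IsModular ρ) {x y : X}
    (hx : x ∈ modularSpace ρ) (hy : y ∈ modularSpace ρ) : ρ (x - y) ≤ k * (ρ x + ρ y) :=
  calc ρ (x - y) ≤ ρ ((2 : ℝ) • x) + ρ ((2 : ℝ) • y) := hmod.sub_le_two_smul x y
    _ ≤ k * ρ x + k * ρ y := add_le_add (hΔ x hx) (hΔ y hy)
    _ = k * (ρ x + ρ y) := (mul_add _ _ _).symm

theorem sub_le_sub_add_sub (hΔ : Delta2Type ρ k) (hmod : IsModular ρ) {x y z : X}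
    (hx : x ∈ modularSpace ρ) (hy : y ∈ modularSpace ρ) (hz : z ∈ modularSpace ρ) :
    ρ (x - z) ≤ k * (ρ (x - y) + ρ (y - z)) := by
  rw [← sub_sub_sub_cancel_right x z y, hmod.map_sub_comm y z]
  exact hΔ.sub_le hmod (hmod.sub_mem_modularSpace hx hy) (hmod.sub_mem_modularSpace hz hy)

end Delta2Type

theorem picard_iterates_rhoCauchy_general {k c : ℝ≥0} {T : X → X} (hmod : IsModular ρ)
    (hΔ : Delta2Type ρ k) (hT : ∀ x ∈ modularSpace ρ, T x ∈ modularSpace ρ) (hc : c < 1)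
    (hcontr : ∀ x ∈ modularSpace ρ, ∀ y ∈ modularSpace ρ,
      ρ (T x - T y) ≤ (c : ℝ≥0∞) * ρ (x - y)) :
    ∀ x ∈ modularSpace ρ, RhoCauchy ρ (fun n => T^[n] x) := by
  intro x hx
  have hmem (n : ℕ) : T^[n] x ∈ modularSpace ρ := Set.MapsTo.iterate hT n hx
  have hshift (m n : ℕ) : ρ (T^[m + 1] x - T^[n + 1] x) ≤ c * ρ (T^[m] x - T^[n] x) := by
    simpa only [Function.iterate_succ_apply'] using hcontr _ (hmem m) _ (hmem n)
  exact tendsto_zero_of_relaxed_triangle (d := fun m n => ρ (T^[m] x - T^[n] x))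
    (fun _ _ => hmod.map_sub_comm _ _)
    (fun m n p => hΔ.sub_le_sub_add_sub hmod (hmem m) (hmem n) (hmem p))
    hshift (fun n => hΔ.ne_top (hmod.sub_mem_modularSpace (hmem n) (hmem 0))) hc

/-- Under the Δ₂-type condition with `c·k < 1/2`, Picard
iterates form a ρ-Cauchy sequence. -/
theorem picard_iterates_rhoCauchy (ρ : X → ℝ≥0∞) (hmod : IsModular ρ)
    (k : ℝ≥0) (hk : 0 < k) (hΔ : Delta2Type ρ k)
    (T : X → X) (hT : ∀ x ∈ modularSpace ρ, T x ∈ modularSpace ρ)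
    (c : ℝ≥0) (hc : c < 1) (hck : (c : ℝ) * k < 1 / 2)
    (hcontr : ∀ x ∈ modularSpace ρ, ∀ y ∈ modularSpace ρ,
      ρ (T x - T y) ≤ (c : ℝ≥0∞) * ρ (x - y)) :
    ∀ x ∈ modularSpace ρ, RhoCauchy ρ (fun n => T^[n] x) :=
  picard_iterates_rhoCauchy_general hmod hΔ hT hc hcontr
end

section
/- Let ρ be a modular on a real vector space X with the Fatou property, and let T : X_ρ → X_ρ satisfy ρ(Tx − Ty) ≤ c·ρ(x − y) for all x, y ∈ X_ρ, where c ∈ [0,1). If b, x₀ ∈ X_ρ are such that ρ(Tⁿb − x₀) → 0 as n → ∞, then Tx₀ = x₀. -/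
open Filter Topology ENNReal NNReal

variable {X : Type*} [AddCommGroup X] [Module ℝ X]

/-!
Halving repairs the triangle inequality of a modular: `ρ((a - b) / 2) ≤ ρ(x - a) + ρ(x - b)`. Hence
`ρ`-limits are unique. A Lipschitz bound carries `Tⁿb → x₀` to `Tⁿ⁺¹b → Tx₀`, while the shifted
sequence `Tⁿ⁺¹b` still converges to `x₀`.
-/

section

variable {ρ : X → ℝ≥0∞}

theorem IsModular.half_smul_sub_le (hρ : IsModular ρ) (x a b : X) :
    ρ ((1 / 2 : ℝ) • (a - b)) ≤ ρ (x - a) + ρ (x - b) := by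
  obtain ⟨-, map_neg, map_convex_combination_le⟩ := hρ
  calc
    ρ ((1 / 2 : ℝ) • (a - b)) = ρ ((1 / 2 : ℝ) • (-(x - a)) + (1 / 2 : ℝ) • (x - b)) := by
      congr 1
      module
    _ ≤ ρ (-(x - a)) + ρ (x - b) :=
      map_convex_combination_le _ _ _ _ (by norm_num) (by norm_num) (by norm_num)
    _ = ρ (x - a) + ρ (x - b) := by rw [map_neg]

theorem RhoTendsto.unique (hρ : IsModular ρ) {x : ℕ → X} {a b : X}
    (ha : RhoTendsto ρ x a) (hb : RhoTendsto ρ x b) : a = b := by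
  have sum_tendsto : Tendsto (fun n => ρ (x n - a) + ρ (x n - b)) atTop (𝓝 0) := by
    simpa only [add_zero] using Tendsto.add ha hb
  have half_eq_zero : ρ ((1 / 2 : ℝ) • (a - b)) = 0 :=
    nonpos_iff_eq_zero.mp <| ge_of_tendsto' sum_tendsto fun n => hρ.half_smul_sub_le (x n) a b
  have smul_eq : (1 / 2 : ℝ) • (a - b) = 0 := (hρ.1 _).mp half_eq_zero
  exact sub_eq_zero.mp <| (smul_eq_zero_iff_right (by norm_num)).mp smul_eq

omit [Module ℝ X] in
theorem RhoTendsto.of_le_mul {x y : ℕ → X} {a b : X} {c : ℝ≥0} (hx : RhoTendsto ρ x a)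
    (hle : ∀ n, ρ (y n - b) ≤ c * ρ (x n - a)) : RhoTendsto ρ y b := by
  have bound_tendsto : Tendsto (fun n => (c : ℝ≥0∞) * ρ (x n - a)) atTop (𝓝 0) := by
    simpa only [mul_zero] using ENNReal.Tendsto.const_mul hx (.inr ENNReal.coe_ne_top)
  exact tendsto_of_tendsto_of_tendsto_of_le_of_le tendsto_const_nhds bound_tendsto
    (fun _ => zero_le) hle

theorem isFixedPt_of_rhoTendsto_iterate (hρ : IsModular ρ) {T : X → X} {b x₀ : X}
    (hlim : RhoTendsto ρ (fun n => T^[n] b) x₀)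
    (hcont : RhoTendsto ρ (fun n => T (T^[n] b)) (T x₀)) : Function.IsFixedPt T x₀ := by
  have shift_tendsto : RhoTendsto ρ (fun n => T (T^[n] b)) x₀ := by
    simpa only [RhoTendsto, Function.iterate_succ_apply'] using
      (tendsto_add_atTop_iff_nat 1).mpr hlim
  exact hcont.unique hρ shift_tendsto

theorem fixedPoint_of_picard_limit_general (hρ : IsModular ρ) {T : X → X} {S : Set X}
    (hT : Set.MapsTo T S S) {b x₀ : X} (hb : b ∈ S) {c : ℝ≥0}
    (hlip : ∀ x ∈ S, ρ (T x - T x₀) ≤ c * ρ (x - x₀))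
    (hlim : RhoTendsto ρ (fun n => T^[n] b) x₀) : T x₀ = x₀ :=
  isFixedPt_of_rhoTendsto_iterate hρ hlim <| hlim.of_le_mul fun n => hlip _ (hT.iterate n hb)

end

/-- Under the Fatou property, a ρ-limit of the Picard
iterates of a ρ-contraction is a fixed point. -/
theorem fixedPoint_of_picard_limit (ρ : X → ℝ≥0∞) (hmod : IsModular ρ)
    (hFatou : FatouProperty ρ)
    (T : X → X) (hT : ∀ x ∈ modularSpace ρ, T x ∈ modularSpace ρ)
    (c : ℝ≥0) (hc : c < 1)
    (hcontr : ∀ x ∈ modularSpace ρ, ∀ y ∈ modularSpace ρ,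
      ρ (T x - T y) ≤ (c : ℝ≥0∞) * ρ (x - y))
    (b x₀ : X) (hb : b ∈ modularSpace ρ) (hx₀ : x₀ ∈ modularSpace ρ)
    (hlim : RhoTendsto ρ (fun n => T^[n] b) x₀) :
    T x₀ = x₀ :=
  fixedPoint_of_picard_limit_general hmod hT hb (fun x hx => hcontr x hx x₀ hx₀) hlim
end
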